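/- Let H₁, H₂, H₃ be complex Hilbert spaces and let T : H₁ → H₂ and S : H₂ → H₃ be bounded linear operators with S ∘ T = 0. Let Δ = T T* + S* S : H₂ → H₂, where * denotes the Hilbert-space adjoint. Then there exists ε > 0 such that the spectrum of Δ is contained in {0} ∪ [ε, ∞) if and only if both the range of T and the range of S are closed subspaces. -/

import Mathlib

/-!
Since `S T = 0`, the two summands of `Δ` multiply to zero in both orders, so for `r ≠ 0` we have
`(r - T T*)(r - S* S) = r (r - Δ)`: away from `0` the spectrum of `Δ` is the union of the spectra
of `T T*` and `S* S`, and `Δ` has a spectral gap iff both summands do.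

For a single operator `A`, the functional calculus turns a spectral gap of `A* A` into an operator
inequality `A* A ≤ (C A* A)²`, that is, into the estimate `‖A x‖ ≤ C ‖A* A x‖`. This says that `A*`
is bounded below on the range of `A`, which is equivalent to `A` having closed range, and also to
`A*` having closed range.
-/

section SpectralGap

/-- `a` has a spectral gap at `0`: its real spectrum lies in `{0} ∪ [ε, ∞)` for some `ε > 0`. The
point `0` may or may not belong to the spectrum, and negative spectrum is excluded. This is the
property of the Laplacian being characterised, isolated so as to be studied on each summand. -/
def HasSpectralGap {A : Type*} [Ring A] [Algebra ℝ A] (a : A) : Prop :=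
  ∃ ε : ℝ, 0 < ε ∧ spectrum ℝ a ⊆ {0} ∪ Set.Ici ε

theorem mem_spectrum_add_iff_of_mul_eq_zero {R A : Type*} [Field R] [Ring A] [Algebra R A]
    {a b : A} (hab : a * b = 0) (hba : b * a = 0) {r : R} (hr : r ≠ 0) :
    r ∈ spectrum R (a + b) ↔ r ∈ spectrum R a ∨ r ∈ spectrum R b := by
  have commute : Commute (algebraMap R A r - a) (algebraMap R A r - b) :=
    (Algebra.commute_algebraMap_left r _).sub_left
      ((Algebra.commute_algebraMap_right r a).sub_right (hab.trans hba.symm))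
  have factor : (algebraMap R A r - a) * (algebraMap R A r - b) =
      algebraMap R A r * (algebraMap R A r - (a + b)) := by
    simp only [sub_mul, mul_sub, mul_add, hab, ← Algebra.commutes r a]
    abel
  have isUnit_r : IsUnit (algebraMap R A r) := hr.isUnit.map _
  rw [spectrum.mem_iff, spectrum.mem_iff, spectrum.mem_iff, ← not_and_or,
    ← commute.isUnit_mul_iff, factor, (Algebra.commute_algebraMap_left r _).isUnit_mul_iff,
    and_iff_right isUnit_r]

theorem hasSpectralGap_add_iff_of_mul_eq_zero {A : Type*} [Ring A] [Algebra ℝ A]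
    {a b : A} (hab : a * b = 0) (hba : b * a = 0) :
    HasSpectralGap (a + b) ↔ HasSpectralGap a ∧ HasSpectralGap b := by
  have mem_add {r : ℝ} (hr : r ≠ 0) := mem_spectrum_add_iff_of_mul_eq_zero hab hba hr
  constructor
  · rintro ⟨ε, hε, h⟩
    constructor <;> refine ⟨ε, hε, fun r hr ↦ or_iff_not_imp_left.2 fun h0 ↦ ?_⟩
    · exact (h ((mem_add h0).2 (.inl hr))).resolve_left h0
    · exact (h ((mem_add h0).2 (.inr hr))).resolve_left h0
  · rintro ⟨⟨ε, hε, ha⟩, δ, hδ, hb⟩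
    refine ⟨min ε δ, lt_min hε hδ, fun r hr ↦ or_iff_not_imp_left.2 fun h0 ↦ ?_⟩
    rcases (mem_add h0).1 hr with hra | hrb
    · exact (min_le_left ε δ).trans ((ha hra).resolve_left h0)
    · exact (min_le_right ε δ).trans ((hb hrb).resolve_left h0)

theorem le_smul_sq_iff_forall_mem_spectrum {A : Type*} [CStarAlgebra A] [PartialOrder A]
    [StarOrderedRing A] {a : A} (ha : IsSelfAdjoint a) (C : ℝ) :
    a ≤ (C • a) ^ 2 ↔ ∀ r ∈ spectrum ℝ a, r ≤ (C * r) ^ 2 := by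
  have sq_eq : (C • a) ^ 2 = cfc (fun r : ℝ ↦ (C * r) ^ 2) a := by
    rw [cfc_pow (fun r : ℝ ↦ C * r) 2 a, cfc_const_mul_id C a]
  rw [sq_eq, ← cfc_le_iff (fun r ↦ r) _ a, cfc_id' ℝ a]

theorem hasSpectralGap_iff_exists_le_smul_sq {A : Type*} [CStarAlgebra A] [PartialOrder A]
    [StarOrderedRing A] {a : A} (ha : 0 ≤ a) :
    HasSpectralGap a ↔ ∃ C : ℝ, 0 < C ∧ a ≤ (C • a) ^ 2 := by
  simp only [le_smul_sq_iff_forall_mem_spectrum ha.isSelfAdjoint]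
  constructor
  · rintro ⟨ε, hε, h⟩
    refine ⟨(√ε)⁻¹, by positivity, fun r hr ↦ ?_⟩
    rw [mul_pow, inv_pow, Real.sq_sqrt hε.le]
    rcases h hr with rfl | hεr
    · simp
    · have hr_pos : 0 < r := hε.trans_le hεr
      calc r = ε⁻¹ * (ε * r) := by field_simp
        _ ≤ ε⁻¹ * r ^ 2 := by rw [sq]; gcongr; exact hεr
  · rintro ⟨C, hC, h⟩
    refine ⟨(C ^ 2)⁻¹, by positivity, fun r hr ↦ ?_⟩
    rcases (spectrum_nonneg_of_nonneg ha hr).eq_or_lt with h0 | hr_pos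
    · exact .inl h0.symm
    · refine .inr ((inv_le_iff_one_le_mul₀ (pow_pos hC 2)).2 ?_)
      refine le_of_mul_le_mul_left ?_ hr_pos
      linarith [h r hr]

end SpectralGap

section ClosedRange

open ContinuousLinearMap

variable {𝕜 E F : Type*} [RCLike 𝕜]
  [NormedAddCommGroup E] [InnerProductSpace 𝕜 E] [CompleteSpace E]
  [NormedAddCommGroup F] [InnerProductSpace 𝕜 F] [CompleteSpace F]

theorem exists_norm_le_mul_norm_adjoint_of_isClosed_range (A : E →L[𝕜] F)
    (hA : IsClosed (Set.range A)) :
    ∃ C : ℝ, 0 < C ∧ ∀ x, ‖A x‖ ≤ C * ‖adjoint A (A x)‖ := by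
  have : CompleteSpace A.range :=
    completeSpace_coe_iff_isComplete.2 hA.isComplete
  obtain ⟨C, hC, exists_preimage⟩ :=
    exists_preimage_norm_le A.rangeRestrict A.toLinearMap.surjective_rangeRestrict
  refine ⟨C, hC, fun x ↦ ?_⟩
  obtain ⟨u, hu, norm_u⟩ := exists_preimage (A.rangeRestrict x)
  replace hu : A u = A x := congrArg Subtype.val hu
  replace norm_u : ‖u‖ ≤ C * ‖A x‖ := norm_u
  rcases (norm_nonneg (A x)).eq_or_lt with h0 | h_pos
  · rw [← h0]
    positivity
  refine le_of_mul_le_mul_right ?_ h_pos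
  calc ‖A x‖ * ‖A x‖ = RCLike.re (inner 𝕜 (adjoint A (A x)) u) := by
        rw [adjoint_inner_left, hu, inner_self_eq_norm_mul_norm]
    _ ≤ ‖adjoint A (A x)‖ * ‖u‖ := re_inner_le_norm _ _
    _ ≤ ‖adjoint A (A x)‖ * (C * ‖A x‖) := by gcongr
    _ = C * ‖adjoint A (A x)‖ * ‖A x‖ := by ring

theorem range_adjoint_comp_subtypeL_topologicalClosure_range (A : E →L[𝕜] F) :
    Set.range ((adjoint A).comp A.range.topologicalClosure.subtypeL) =
      Set.range (adjoint A) := by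
  set K := A.range.topologicalClosure
  refine (Set.range_comp_subset_range K.subtypeL (adjoint A)).antisymm ?_
  rintro _ ⟨y, rfl⟩
  have sub_mem_ker : y - K.starProjection y ∈ (adjoint A).ker := by
    rw [← A.orthogonal_range, ← Submodule.orthogonal_closure]
    exact K.sub_starProjection_mem_orthogonal y
  refine ⟨K.orthogonalProjectionOnto y, ?_⟩
  exact (sub_eq_zero.1 ((map_sub (adjoint A) _ _).symm.trans sub_mem_ker)).symm

theorem isClosed_range_adjoint_of_norm_le_mul_norm_adjoint (A : E →L[𝕜] F) {C : ℝ}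
    (hC : 0 ≤ C) (h : ∀ x, ‖A x‖ ≤ C * ‖adjoint A (A x)‖) :
    IsClosed (Set.range (adjoint A)) := by
  have bound_closure : ∀ y ∈ closure (Set.range A), ‖y‖ ≤ C * ‖adjoint A y‖ :=
    closure_minimal (Set.range_subset_iff.2 h)
      (isClosed_le (by fun_prop) (by fun_prop) : IsClosed {y | ‖y‖ ≤ C * ‖adjoint A y‖})
  rw [← range_adjoint_comp_subtypeL_topologicalClosure_range]
  have antilipschitz : AntilipschitzWith ⟨C, hC⟩
      ((adjoint A).comp A.range.topologicalClosure.subtypeL) :=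
    antilipschitz_of_bound _ fun y ↦ bound_closure y y.2
  exact antilipschitz.isClosed_range (ContinuousLinearMap.uniformContinuous _)

theorem isClosed_range_adjoint_of_isClosed_range (A : E →L[𝕜] F)
    (hA : IsClosed (Set.range A)) : IsClosed (Set.range (adjoint A)) := by
  obtain ⟨C, hC, h⟩ := exists_norm_le_mul_norm_adjoint_of_isClosed_range A hA
  exact isClosed_range_adjoint_of_norm_le_mul_norm_adjoint A hC.le h

theorem isClosed_range_adjoint_iff (A : E →L[𝕜] F) :
    IsClosed (Set.range (adjoint A)) ↔ IsClosed (Set.range A) :=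
  ⟨fun h ↦ adjoint_adjoint A ▸ isClosed_range_adjoint_of_isClosed_range (adjoint A) h,
    isClosed_range_adjoint_of_isClosed_range A⟩

theorem isClosed_range_iff_exists_norm_le_mul_norm_adjoint (A : E →L[𝕜] F) :
    IsClosed (Set.range A) ↔ ∃ C : ℝ, 0 < C ∧ ∀ x, ‖A x‖ ≤ C * ‖adjoint A (A x)‖ :=
  ⟨exists_norm_le_mul_norm_adjoint_of_isClosed_range A, fun ⟨_, hC, h⟩ ↦
    (isClosed_range_adjoint_iff A).1
      (isClosed_range_adjoint_of_norm_le_mul_norm_adjoint A hC.le h)⟩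

end ClosedRange

section AdjointCompSelf

open ContinuousLinearMap

variable {E : Type*} [NormedAddCommGroup E] [InnerProductSpace ℂ E] [CompleteSpace E]

theorem le_smul_sq_iff_forall_re_inner_le {P : E →L[ℂ] E} (hP : IsSelfAdjoint P) (C : ℝ) :
    P ≤ (C • P) ^ 2 ↔ ∀ x, RCLike.re (inner ℂ (P x) x) ≤ (C * ‖P x‖) ^ 2 := by
  have smul_isSelfAdjoint : IsSelfAdjoint (C • P) := (IsSelfAdjoint.all C).smul hP
  have isSymmetric : ((C • P) ^ 2 - P).IsSymmetric :=
    ((smul_isSelfAdjoint.pow 2).sub hP).isSymmetric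
  have re_inner_sq (x : E) : RCLike.re (inner ℂ (((C • P) ^ 2) x) x) = (C * ‖P x‖) ^ 2 :=
    calc RCLike.re (inner ℂ (((C • P) ^ 2) x) x)
        = RCLike.re (inner ℂ ((C • P) x) ((C • P) x)) := by
          rw [sq]
          exact congrArg _ (smul_isSelfAdjoint.isSymmetric _ _)
      _ = (C * ‖P x‖) ^ 2 := by
          rw [inner_self_eq_norm_sq, smul_apply, norm_smul, mul_pow, mul_pow, Real.norm_eq_abs,
            sq_abs]
  rw [le_def, isPositive_def, and_iff_right isSymmetric]
  refine forall_congr' fun x ↦ ?_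
  rw [reApplyInnerSelf_apply, sub_apply, inner_sub_left, map_sub, re_inner_sq, sub_nonneg]

variable {F : Type*} [NormedAddCommGroup F] [InnerProductSpace ℂ F] [CompleteSpace F]

theorem adjoint_comp_self_le_smul_sq_iff (A : E →L[ℂ] F) {C : ℝ} (hC : 0 ≤ C) :
    (adjoint A).comp A ≤ (C • (adjoint A).comp A) ^ 2 ↔
      ∀ x, ‖A x‖ ≤ C * ‖adjoint A (A x)‖ := by
  rw [le_smul_sq_iff_forall_re_inner_le (isPositive_adjoint_comp_self A).isSelfAdjoint]
  refine forall_congr' fun x ↦ ?_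
  rw [← apply_norm_sq_eq_inner_adjoint_left, comp_apply,
    sq_le_sq₀ (norm_nonneg _) (by positivity)]

theorem hasSpectralGap_adjoint_comp_self_iff (A : E →L[ℂ] F) :
    HasSpectralGap ((adjoint A).comp A) ↔ IsClosed (Set.range A) := by
  have nonneg : 0 ≤ (adjoint A).comp A :=
    (nonneg_iff_isPositive _).2 (isPositive_adjoint_comp_self A)
  rw [hasSpectralGap_iff_exists_le_smul_sq nonneg,
    isClosed_range_iff_exists_norm_le_mul_norm_adjoint]
  exact exists_congr fun C ↦ and_congr_right fun hC ↦ adjoint_comp_self_le_smul_sq_iff A hC.le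

theorem hasSpectralGap_self_comp_adjoint_iff (A : E →L[ℂ] F) :
    HasSpectralGap (A.comp (adjoint A)) ↔ IsClosed (Set.range A) := by
  rw [← isClosed_range_adjoint_iff, ← hasSpectralGap_adjoint_comp_self_iff, adjoint_adjoint]

end AdjointCompSelf

open ContinuousLinearMap in
/-- For bounded operators `T : H₁ → H₂`, `S : H₂ → H₃` between complex
Hilbert spaces with `S ∘ T = 0` and Laplacian `Δ = T T* + S* S` on `H₂`, the spectrum of `Δ`
is contained in `{0} ∪ [ε, ∞)` for some `ε > 0` if and only if both `range T` and `range S`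
are closed (i.e. cohomology is reduced in the two adjacent degrees). -/
theorem stmt_7 {H₁ H₂ H₃ : Type*}
    [NormedAddCommGroup H₁] [InnerProductSpace ℂ H₁] [CompleteSpace H₁]
    [NormedAddCommGroup H₂] [InnerProductSpace ℂ H₂] [CompleteSpace H₂]
    [NormedAddCommGroup H₃] [InnerProductSpace ℂ H₃] [CompleteSpace H₃]
    (T : H₁ →L[ℂ] H₂) (S : H₂ →L[ℂ] H₃) (hST : S.comp T = 0) :
    (∃ ε : ℝ, 0 < ε ∧
        spectrum ℝ (T.comp (adjoint T) + (adjoint S).comp S) ⊆ {0} ∪ Set.Ici ε)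
      ↔ IsClosed (Set.range T) ∧ IsClosed (Set.range S) := by
  have hTS : (adjoint T).comp (adjoint S) = 0 := by rw [← adjoint_comp, hST, map_zero]
  have upper_mul_lower : (adjoint S).comp S * T.comp (adjoint T) = 0 := by
    rw [mul_def, comp_assoc, ← comp_assoc S, hST, zero_comp, comp_zero]
  have lower_mul_upper : T.comp (adjoint T) * (adjoint S).comp S = 0 := by
    rw [mul_def, comp_assoc, ← comp_assoc (adjoint T), hTS, zero_comp, comp_zero]
  rw [← hasSpectralGap_self_comp_adjoint_iff, ← hasSpectralGap_adjoint_comp_self_iff]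
  exact hasSpectralGap_add_iff_of_mul_eq_zero lower_mul_upper upper_mul_lower
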